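/- Let M = ⟨V, ⊞_M, D⟩ be an Nmatrix such that V \ D has at most n elements and ⊢_⊞ ⊆ ⊢_M (every single-conclusion consequence valid for ⊞ holds in M). Then, for distinct variables p₀, …, pₙ, letting Γₙ = {pᵢ ⊞ pⱼ : 0 ≤ i ≠ j ≤ n} and Δₙ = {pᵢ : 0 ≤ i ≤ n}, we have Γₙ ⊩_M Δₙ, whereas Γₙ ⊬_⊞ pᵢ for every 0 ≤ i ≤ n. -/

import Mathlib

/-- Formulas built from countably many propositional variables with a single
binary connective `⊞` (platypus). -/
inductive Fm : Type where
  | var : ℕ → Fm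
  | pl : Fm → Fm → Fm
deriving DecidableEq

namespace Fm

/-- The set of propositional variables occurring in a formula. -/
def vars : Fm → Set ℕ
  | var n => {n}
  | pl a b => vars a ∪ vars b

/-- A `𝔅_⊞`-valuation: a two-valued function such that
`v (φ ⊞ ψ) ∈ {min (v φ) (v ψ), max (v φ) (v ψ)}`. -/
def IsVal (v : Fm → Bool) : Prop :=
  ∀ a b : Fm, v (a.pl b) = (v a && v b) ∨ v (a.pl b) = (v a || v b)

/-- The multiple-conclusion consequence `Γ ⊩_⊞ Δ`. -/
def Mc (Γ Δ : Set Fm) : Prop :=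
  ∀ v : Fm → Bool, IsVal v → (∀ φ ∈ Γ, v φ = true) → ∃ ψ ∈ Δ, v ψ = true

/-- The single-conclusion consequence `Γ ⊢_⊞ φ`. -/
def Sc (Γ : Set Fm) (φ : Fm) : Prop := Mc Γ {φ}

end Fm

namespace Fm

/-- An `M`-valuation for an Nmatrix `⟨V, op, D⟩` with `op : V → V → ℘(V)∖{∅}`. -/
def IsNVal {V : Type} (op : V → V → Set V) (v : Fm → V) : Prop :=
  ∀ a b : Fm, v (a.pl b) ∈ op (v a) (v b)

/-- The multiple-conclusion consequence `Γ ⊩_M Δ` of an Nmatrix. -/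
def NMc {V : Type} (op : V → V → Set V) (D : Set V) (Γ Δ : Set Fm) : Prop :=
  ∀ v : Fm → V, IsNVal op v → (∀ φ ∈ Γ, v φ ∈ D) → ∃ ψ ∈ Δ, v ψ ∈ D

/-- The single-conclusion consequence `Γ ⊢_M φ` of an Nmatrix. -/
def NSc {V : Type} (op : V → V → Set V) (D : Set V) (Γ : Set Fm) (φ : Fm) : Prop :=
  NMc op D Γ {φ}

end Fm

def Fm.ext2 {V : Type} (g : ℕ → V) (f : V → V → V) : Fm → V
  | Fm.var k => g k
  | Fm.pl a b => f (Fm.ext2 g f a) (Fm.ext2 g f b)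

open Fm in
/-- if `M = ⟨V, ⊞_M, D⟩` is an Nmatrix whose set of
non-designated values has at most `n` elements and `⊢_⊞ ⊆ ⊢_M`, then for
distinct variables `p₀, …, pₙ`, taking `Γₙ = {pᵢ ⊞ pⱼ : i ≠ j}` and
`Δₙ = {pᵢ : 0 ≤ i ≤ n}`, we have `Γₙ ⊩_M Δₙ` whereas `Γₙ ⊬_⊞ pᵢ` for all `i`. -/
theorem platypus_saturation_failure (n : ℕ) (V : Type)
    (op : V → V → Set V) (D : Set V)
    (hne : ∀ x y : V, (op x y).Nonempty)
    (hfin : (Dᶜ : Set V).Finite) (hcard : (Dᶜ : Set V).ncard ≤ n)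
    (hsub : ∀ (Γ : Set Fm) (φ : Fm), Sc Γ φ → NSc op D Γ φ)
    (p : Fin (n + 1) → ℕ) (hp : Function.Injective p) :
    NMc op D {φ | ∃ i j : Fin (n + 1), i ≠ j ∧ φ = (Fm.var (p i)).pl (Fm.var (p j))}
      {φ | ∃ i : Fin (n + 1), φ = Fm.var (p i)} ∧
    ∀ i : Fin (n + 1),
      ¬ Sc {φ | ∃ i j : Fin (n + 1), i ≠ j ∧ φ = (Fm.var (p i)).pl (Fm.var (p j))}
        (Fm.var (p i)) := by
  classical
  constructor
  · intro v hv hΓ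
    by_contra hcon
    have hnd : ∀ i, v (Fm.var (p i)) ∉ D := fun i hi => hcon ⟨_, ⟨i, rfl⟩, hi⟩
    have hc : hfin.toFinset.card < (Finset.univ : Finset (Fin (n + 1))).card := by
      rw [← Set.ncard_eq_toFinset_card _ hfin, Finset.card_univ, Fintype.card_fin]
      omega
    obtain ⟨i, -, j, -, hij, he⟩ := Finset.exists_ne_map_eq_of_card_lt_of_maps_to hc
      (f := fun i => v (Fm.var (p i))) (fun i _ => by simpa using hnd i)
    have hd := hΓ _ ⟨i, j, hij, rfl⟩
    have hop := hv (Fm.var (p i)) (Fm.var (p j))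
    rw [← he] at hop
    have hx := hnd i
    generalize v (Fm.var (p i)) = x at *
    generalize v ((Fm.var (p i)).pl (Fm.var (p j))) = d at *
    have hf : ∀ a b : V, ∃ c, c ∈ op a b ∧ (a = x → b = x → c = d) := by
      intro a b
      by_cases h : a = x ∧ b = x
      · exact ⟨d, by rw [h.1, h.2]; exact hop, fun _ _ => rfl⟩
      · obtain ⟨c, hc⟩ := hne a b
        exact ⟨c, hc, fun h1 h2 => absurd ⟨h1, h2⟩ h⟩
    choose f hf1 hf2 using hf
    have hsc : Sc {(Fm.var 0).pl (Fm.var 0)} (Fm.var 0) := by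
      intro w hw h
      refine ⟨_, rfl, ?_⟩
      have h1 := h _ rfl
      have h2 := hw (Fm.var 0) (Fm.var 0)
      rw [h1] at h2
      simpa using h2.symm
    obtain ⟨ψ, hψ, hD⟩ := hsub _ _ hsc (Fm.ext2 (fun _ => x) f) (fun a b => hf1 _ _) (by
      intro φ hφ
      rw [Set.mem_singleton_iff.1 hφ]
      change f x x ∈ D
      rw [hf2 x x rfl rfl]
      exact hd)
    rw [Set.mem_singleton_iff.1 hψ] at hD
    exact hx hD
  · intro i h
    obtain ⟨ψ, hψ, hD⟩ := h (Fm.ext2 (fun k => decide (k ≠ p i)) or) (fun a b => Or.inr rfl) (by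
      rintro φ ⟨a, b, hab, rfl⟩
      have : p a ≠ p i ∨ p b ≠ p i := by
        by_contra hh
        push Not at hh
        exact hab (hp (hh.1.trans hh.2.symm))
      simpa [Fm.ext2] using this)
    rw [Set.mem_singleton_iff.1 hψ] at hD
    simp [Fm.ext2] at hD
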